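/- One-shot mutual covering lemma. Let 𝒰₀, 𝒰₁, 𝒰₂ be finite sets and let P be a probability distribution on 𝒰₀ × 𝒰₁ × 𝒰₂ with coordinate random variables (U₀, U₁, U₂). Let 0 < ε < 1 and let r₁, r₂ be positive integers such that r₁ + r₂ ≥ I_∞^ε(U₁ : U₂ | U₀)_P + 2·log₂(1/ε). Set T₁ := 2^{r₁}, T₂ := 2^{r₂}. Define the probability distribution P₁ on 𝒰₀ × 𝒰₁^{T₁} × 𝒰₂^{T₂} × [T₁] × [T₂] as follows: choose u₀ according to the marginal P^{U₀} and, independently, (k₁,k₂) uniformly on [T₁]×[T₂]; given these, choose the pair (u₁(k₁), u₂(k₂)) according to the conditional distribution P^{U₁U₂}(·,·|u₀), and independently choose u₁(j) for each j ≠ k₁ i.i.d. according to P^{U₁}(·|u₀) and u₂(j) for each j ≠ k₂ i.i.d. according to P^{U₂}(·|u₀). Define the distribution P̃ on 𝒰₀ × 𝒰₁^{T₁} × 𝒰₂^{T₂} under which u₀ is chosen according to P^{U₀} and, given u₀, all coordinates u₁(1),…,u₁(T₁), u₂(1),…,u₂(T₂) are mutually independent with laws P^{U₁}(·|u₀) and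 P^{U₂}(·|u₀) respectively. Let κ be any stochastic kernel from 𝒰₀ × 𝒰₁^{T₁} × 𝒰₂^{T₂} to [T₁] × [T₂] that agrees with the conditional distribution of (k₁,k₂) under P₁ at every point having positive probability under the marginal of P₁ on 𝒰₀ × 𝒰₁^{T₁} × 𝒰₂^{T₂}, and define P₂ := P̃·κ, i.e., P₂(u₀, ū₁, ū₂, k₁, k₂) := P̃(u₀, ū₁, ū₂)·κ(u₀, ū₁, ū₂)(k₁,k₂). Then ‖P₁ − P₂‖₁ ≤ 5ε. -/

import Mathlib

/-!
The conditional law of the indices is the same kernel under both distributions, so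
`‖P1 - P2‖₁` is the distance between their marginals on `(u₀, v₁, v₂)`. Fix `u₀`, write `α`, `β`
for the conditional laws of `U₁`, `U₂`, `J` for the joint one, and `J' ≤ J` for the smoothed
subdistribution, with density `g = J' / (α ⊗ β) ≤ M` and total mass `c`. The marginal of `P1` has
density `N⁻¹ ∑ₖ (J / (α ⊗ β)) (v₁ k₁, v₂ k₂)`, `N = T₁ T₂`, with respect to the product law.

Replacing `J` by `J'` costs `1 - c`. The variables `g (v₁ k₁, v₂ k₂)` are not pairwise
uncorrelated, since the marginals of `J'` differ from `α` and `β`. Centring in both coordinates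
repairs this: with `a = E[g | x]`, `b = E[g | y]`,
`g - 1 = (g - a - b + c) - (1 - a) - (1 - b) + (1 - c)`. Since `a, b ≤ 1`, each of the last three
terms has `L¹`-norm exactly `1 - c`, while the doubly centred terms are pairwise uncorrelated
(`sum_second_moment`, applied once in each coordinate) with variance at most `E g² ≤ M`, so their
average has `L¹`-norm at most `√(M / N)`. This gives `4 (1 - c) + √(M / N)` for fixed `u₀`
(`core_bound`). Averaging over `u₀` yields `4 ε + t` for each `t > ε`: the rate condition provides,
for each such `t`, an admissible `M = 2 ^ d ≤ t² N`.
-/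

noncomputable section

/-- The ℓ₁-distance between two real-valued functions on a finite set. -/
def l1dist {S : Type*} [Fintype S] (P Q : S → ℝ) : ℝ := ∑ s, |P s - Q s|

/-- A probability distribution on a finite set: nonnegative and summing to one. -/
def IsProbDist {S : Type*} [Fintype S] (P : S → ℝ) : Prop :=
  (∀ s, 0 ≤ P s) ∧ ∑ s, P s = 1

/-- The ε-smooth max relative entropy `D_∞^ε(P‖Q)`, as an extended real.
A real `d` is achievable iff there is a subdistribution `P' ≤ P` with
`‖P − P'‖₁ ≤ ε` and `P'(x) ≤ 2^d · Q(x)` for all `x` (the latter condition is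
equivalent to `max_{x : P'(x) > 0} log₂(P'(x)/Q(x)) ≤ d`). -/
def Dmax {X : Type*} [Fintype X] (ε : ℝ) (P Q : X → ℝ) : EReal :=
  sInf ((fun d : ℝ => (d : EReal)) ''
    {d | ∃ P' : X → ℝ, (∀ x, 0 ≤ P' x ∧ P' x ≤ P x) ∧ l1dist P P' ≤ ε ∧
      ∀ x, P' x ≤ (2 : ℝ) ^ d * Q x})

/-- The ε-smooth max conditional mutual information `I_∞^ε(U₁ : U₂ | U₀)_P` of a joint
distribution `P` on `U₀ × U₁ × U₂`:
`D_∞^ε(P ‖ P^{U₀} × P^{U₁|U₀} × P^{U₂|U₀})`. -/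
def smoothImaxCond {U0 U1 U2 : Type*} [Fintype U0] [Fintype U1] [Fintype U2]
    (ε : ℝ) (P : U0 × U1 × U2 → ℝ) : EReal :=
  Dmax ε P (fun u =>
    (∑ b, P (u.1, u.2.1, b)) * (∑ a, P (u.1, a, u.2.2)) / (∑ a, ∑ b, P (u.1, a, b)))

open Finset

/-! ### Product weights and second moments -/

/-- Placing `F` at coordinate `i` and a probability weight at the other coordinates. -/
lemma sum_pin {ι A : Type*} [Fintype ι] [DecidableEq ι] [Fintype A]
    (α : A → ℝ) (hα : ∑ a, α a = 1) (i : ι) (F : A → ℝ) :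
    ∑ v : ι → A, F (v i) * ∏ j ∈ univ.erase i, α (v j) = ∑ a, F a := by
  have h1 : ∀ v : ι → A, F (v i) * ∏ j ∈ univ.erase i, α (v j)
      = ∏ j, (if j = i then F (v j) else α (v j)) := by
    intro v
    rw [← mul_prod_erase univ _ (mem_univ i), if_pos rfl]
    congr 1
    refine prod_congr rfl fun j hj => ?_
    rw [if_neg (ne_of_mem_erase hj)]
  simp_rw [h1]
  have h2 := (prod_univ_sum (fun _ : ι => (univ : Finset A))
    (fun j a => if j = i then F a else α a)).symm
  rw [Fintype.piFinset_univ] at h2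
  rw [h2, ← mul_prod_erase univ _ (mem_univ i)]
  simp only [if_true]
  rw [prod_eq_one, mul_one]
  intro j hj
  simp [ne_of_mem_erase hj, hα]

lemma sum_prod_weight {ι A : Type*} [Fintype ι] [DecidableEq ι] [Fintype A]
    (α : A → ℝ) (hα : ∑ a, α a = 1) :
    ∑ v : ι → A, ∏ j, α (v j) = 1 := by
  have h2 := (prod_univ_sum (fun _ : ι => (univ : Finset A)) (fun _ a => α a)).symm
  rw [Fintype.piFinset_univ] at h2
  rw [h2]; simp [hα]

/-- Distinct coordinates of an i.i.d. vector give uncorrelated centred variables. -/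
lemma sum_cov {ι A : Type*} [Fintype ι] [DecidableEq ι] [Fintype A]
    (α h : A → ℝ) (hα : ∑ a, α a = 1) (hh : ∑ a, α a * h a = 0) (i j : ι) :
    ∑ v : ι → A, (∏ l, α (v l)) * (h (v i) * h (v j))
      = if i = j then ∑ a, α a * h a ^ 2 else 0 := by
  split_ifs with hij
  · subst hij
    rw [← sum_pin α hα i]
    refine sum_congr rfl fun v _ => ?_
    rw [← mul_prod_erase univ _ (mem_univ i)]; ring
  · have h1 : ∀ v : ι → A, (∏ l, α (v l)) * (h (v i) * h (v j))
        = ∏ l, (α (v l) * ((if l = i then h (v l) else 1) * (if l = j then h (v l) else 1))) := by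
      intro v
      rw [prod_mul_distrib, prod_mul_distrib]; simp
    simp_rw [h1]
    have h2 := (prod_univ_sum (fun _ : ι => (univ : Finset A))
      (fun l a => α a * ((if l = i then h a else 1) * (if l = j then h a else 1)))).symm
    rw [Fintype.piFinset_univ] at h2
    rw [h2]
    refine prod_eq_zero (mem_univ i) ?_
    simpa [hij] using hh

lemma sum_second_moment {ι A : Type*} [Fintype ι] [DecidableEq ι] [Fintype A]
    (α h : A → ℝ) (hα : ∑ a, α a = 1) (hh : ∑ a, α a * h a = 0) :
    ∑ v : ι → A, (∏ l, α (v l)) * (∑ i, h (v i)) ^ 2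
      = Fintype.card ι * ∑ a, α a * h a ^ 2 := by
  have h1 : ∀ v : ι → A, (∏ l, α (v l)) * (∑ i, h (v i)) ^ 2
      = ∑ i, ∑ j, (∏ l, α (v l)) * (h (v i) * h (v j)) := by
    intro v
    rw [sq, sum_mul_sum, mul_sum]
    exact sum_congr rfl fun i _ => mul_sum _ _ _
  simp_rw [h1]
  rw [sum_comm]
  have h2 : ∀ i : ι, ∑ v : ι → A, ∑ j, (∏ l, α (v l)) * (h (v i) * h (v j))
      = ∑ a, α a * h a ^ 2 := by
    intro i
    rw [sum_comm]
    simp_rw [sum_cov α h hα hh]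
    simp
  simp_rw [h2]
  simp

/-- Subtracting the mean does not increase the second moment. -/
lemma sum_sq_sub_mean_le {A : Type*} [Fintype A] (α h : A → ℝ) (hα : ∑ a, α a = 1) (m : ℝ)
    (hm : ∑ a, α a * h a = m) :
    ∑ a, α a * (h a - m) ^ 2 ≤ ∑ a, α a * h a ^ 2 := by
  have : ∑ a, α a * (h a - m) ^ 2
      = ∑ a, α a * h a ^ 2 - 2 * m * ∑ a, α a * h a + m ^ 2 * ∑ a, α a := by
    rw [mul_sum, mul_sum, ← sum_sub_distrib, ← sum_add_distrib]
    exact sum_congr rfl fun a _ => by ring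
  rw [this, hm, hα]
  nlinarith [sq_nonneg m]

/-- Weak law for a doubly centred array: `L¹`-bound from the second moment. -/
lemma sum_abs_array_le {ι κ A B : Type*} [Fintype ι] [DecidableEq ι] [Fintype κ] [DecidableEq κ]
    [Fintype A] [Fintype B] [Nonempty ι] [Nonempty κ]
    (α : A → ℝ) (β : B → ℝ) (hα0 : ∀ a, 0 ≤ α a) (hβ0 : ∀ b, 0 ≤ β b)
    (hα : ∑ a, α a = 1) (hβ : ∑ b, β b = 1) (g : A → B → ℝ)
    (hg1 : ∀ b, ∑ a, α a * g a b = 0) (hg2 : ∀ a, ∑ b, β b * g a b = 0)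
    (t : ℝ) (ht : 0 < t)
    (hvar : ∑ a, α a * ∑ b, β b * g a b ^ 2 ≤ t ^ 2 * (Fintype.card ι * Fintype.card κ)) :
    ∑ v : ι → A, ∑ w : κ → B, (∏ j, α (v j)) * (∏ j, β (w j)) * |∑ i, ∑ k, g (v i) (w k)|
      ≤ t * (Fintype.card ι * Fintype.card κ) := by
  set N : ℝ := (Fintype.card ι * Fintype.card κ : ℝ) with hN
  have hNpos : 0 < N := by
    have h1 : 0 < Fintype.card ι := Fintype.card_pos
    have h2 : 0 < Fintype.card κ := Fintype.card_pos
    positivity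
  have hS2 : ∑ v : ι → A, ∑ w : κ → B, (∏ j, α (v j)) * (∏ j, β (w j)) *
      (∑ i, ∑ k, g (v i) (w k)) ^ 2 = N * ∑ a, α a * ∑ b, β b * g a b ^ 2 := by
    rw [sum_comm]
    have e1 : ∀ w : κ → B, ∑ v : ι → A, (∏ j, α (v j)) * (∏ j, β (w j)) *
        (∑ i, ∑ k, g (v i) (w k)) ^ 2
        = (∏ j, β (w j)) * (Fintype.card ι * ∑ a, α a * (∑ k, g a (w k)) ^ 2) := by
      intro w
      rw [← sum_second_moment α (fun a => ∑ k, g a (w k)) hα, mul_sum]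
      · exact sum_congr rfl fun v _ => by ring
      · simp_rw [mul_sum]
        rw [sum_comm]
        exact sum_eq_zero fun k _ => hg1 _
    simp_rw [e1]
    have e2 : ∀ w : κ → B, (∏ j, β (w j)) * (Fintype.card ι * ∑ a, α a * (∑ k, g a (w k)) ^ 2)
        = ∑ a, Fintype.card ι * α a * ((∏ j, β (w j)) * (∑ k, g a (w k)) ^ 2) := by
      intro w
      rw [mul_sum, mul_sum]
      exact sum_congr rfl fun v _ => by ring
    simp_rw [e2]
    rw [sum_comm, mul_sum]
    refine sum_congr rfl fun a _ => ?_
    rw [← mul_sum, sum_second_moment β (g a) hβ (hg2 a), hN]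
    ring
  have hmass : ∑ v : ι → A, ∑ w : κ → B, (∏ j, α (v j)) * (∏ j, β (w j)) = 1 := by
    rw [← sum_mul_sum, sum_prod_weight α hα, sum_prod_weight β hβ, one_mul]
  -- Instead of Cauchy–Schwarz: `2 |S| ≤ S² / s + s` with `s = t N`.
  have hpt : ∀ (v : ι → A) (w : κ → B),
      (∏ j, α (v j)) * (∏ j, β (w j)) * |∑ i, ∑ k, g (v i) (w k)|
      ≤ (2 * (t * N))⁻¹ * ((∏ j, α (v j)) * (∏ j, β (w j)) * (∑ i, ∑ k, g (v i) (w k)) ^ 2)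
        + (t * N) / 2 * ((∏ j, α (v j)) * (∏ j, β (w j))) := by
    intro v w
    have hw : 0 ≤ (∏ j, α (v j)) * (∏ j, β (w j)) :=
      mul_nonneg (prod_nonneg fun _ _ => hα0 _) (prod_nonneg fun _ _ => hβ0 _)
    have htN : 0 < t * N := mul_pos ht hNpos
    have key : |∑ i, ∑ k, g (v i) (w k)| ≤
        (2 * (t * N))⁻¹ * (∑ i, ∑ k, g (v i) (w k)) ^ 2 + (t * N) / 2 := by
      rw [← sq_abs (∑ i, ∑ k, g (v i) (w k))]
      generalize |∑ i, ∑ k, g (v i) (w k)| = s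
      have : (2 * (t * N))⁻¹ * s ^ 2 + (t * N) / 2 - s = (s - t * N) ^ 2 / (2 * (t * N)) := by
        field_simp; ring
      have h3 : 0 ≤ (s - t * N) ^ 2 / (2 * (t * N)) := by positivity
      linarith
    nlinarith [mul_le_mul_of_nonneg_left key hw]
  refine (sum_le_sum fun v _ => sum_le_sum fun w _ => hpt v w).trans ?_
  have hlin : ∀ (x y : ℝ) (F H : (ι → A) → (κ → B) → ℝ),
      ∑ v, ∑ w, (x * F v w + y * H v w) = x * ∑ v, ∑ w, F v w + y * ∑ v, ∑ w, H v w := by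
    intro x y F H
    simp only [mul_sum, sum_add_distrib]
  rw [hlin, hS2, hmass]
  have htN : 0 < t * N := mul_pos ht hNpos
  have : (2 * (t * N))⁻¹ * (N * ∑ a, α a * ∑ b, β b * g a b ^ 2)
      ≤ (2 * (t * N))⁻¹ * (N * (t ^ 2 * N)) := by gcongr
  have e : (2 * (t * N))⁻¹ * (N * (t ^ 2 * N)) = t * N / 2 := by field_simp
  linarith

/-! ### The covering bound for a fixed conditioning value -/

/-- The covering bound for a fixed value of `u₀`, scaled by the number `N` of cells. -/
lemma core_bound {ι κ A B : Type*} [Fintype ι] [DecidableEq ι] [Fintype κ] [DecidableEq κ]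
    [Fintype A] [Fintype B] [Nonempty ι] [Nonempty κ]
    (α : A → ℝ) (β : B → ℝ) (hα0 : ∀ a, 0 ≤ α a) (hβ0 : ∀ b, 0 ≤ β b)
    (hα : ∑ a, α a = 1) (hβ : ∑ b, β b = 1) (J J' : A → B → ℝ)
    (hJ1 : ∀ a, ∑ b, J a b = α a) (hJ2 : ∀ b, ∑ a, J a b = β b)
    (hJ'0 : ∀ a b, 0 ≤ J' a b) (hJJ : ∀ a b, J' a b ≤ J a b)
    (M t : ℝ) (hM0 : 0 ≤ M) (ht : 0 < t) (hM : ∀ a b, J' a b ≤ M * (α a * β b))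
    (hMt : M ≤ t ^ 2 * (Fintype.card ι * Fintype.card κ)) :
    ∑ v : ι → A, ∑ w : κ → B,
      |(∑ i, ∑ k, J (v i) (w k) * (∏ j ∈ univ.erase i, α (v j)) * ∏ j ∈ univ.erase k, β (w j))
        - (Fintype.card ι * Fintype.card κ : ℝ) * ((∏ j, α (v j)) * ∏ j, β (w j))|
      ≤ (Fintype.card ι * Fintype.card κ : ℝ) * (4 * (1 - ∑ a, ∑ b, J' a b) + t) := by
  -- On the null set of `α ⊗ β` the junk value `0` of the quotient is the wanted density.
  set g : A → B → ℝ := fun a b => J' a b / (α a * β b) with hg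
  set c : ℝ := ∑ a, ∑ b, J' a b with hc
  have hgJ : ∀ a b, α a * β b * g a b = J' a b := by
    intro a b
    by_cases h : α a * β b = 0
    · have := hM a b
      rw [h, mul_zero] at this
      rw [h, zero_mul]; exact le_antisymm (hJ'0 a b) this
    · exact mul_div_cancel₀ _ h
  have hgM : ∀ a b, g a b ≤ M := fun a b =>
    div_le_of_le_mul₀ (mul_nonneg (hα0 a) (hβ0 b)) hM0 (hM a b)
  set p : A → ℝ := fun a => ∑ b, β b * g a b with hp
  set q : B → ℝ := fun b => ∑ a, α a * g a b with hq
  have hαp : ∀ a, α a * p a = ∑ b, J' a b := by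
    intro a
    simp only [hp, mul_sum]
    exact sum_congr rfl fun b _ => by rw [← hgJ]; ring
  have hβq : ∀ b, β b * q b = ∑ a, J' a b := by
    intro b
    simp only [hq, mul_sum]
    exact sum_congr rfl fun a _ => by rw [← hgJ]; ring
  have hαpc : ∑ a, α a * p a = c := by simp_rw [hαp]; rfl
  have hβqc : ∑ b, β b * q b = c := by simp_rw [hβq]; rw [hc, sum_comm]
  have hαp1 : ∀ a, 0 ≤ α a * (1 - p a) := by
    intro a
    rw [mul_sub, mul_one, hαp, ← hJ1, sub_nonneg]
    exact sum_le_sum fun b _ => hJJ a b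
  have hβq1 : ∀ b, 0 ≤ β b * (1 - q b) := by
    intro b
    rw [mul_sub, mul_one, hβq, ← hJ2, sub_nonneg]
    exact sum_le_sum fun a _ => hJJ a b
  have hJ : ∑ a, ∑ b, J a b = 1 := by simp_rw [hJ1]; exact hα
  have hc1 : c ≤ 1 := by
    rw [← hJ]; exact sum_le_sum fun a _ => sum_le_sum fun b _ => hJJ a b
  -- The doubly centred density.
  set G : A → B → ℝ := fun a b => g a b - p a - (q b - c) with hG
  have hG1 : ∀ b, ∑ a, α a * (g a b - p a) = q b - c := by
    intro b
    rw [← hαpc, hq, ← sum_sub_distrib]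
    exact sum_congr rfl fun a _ => by ring
  have hGa : ∀ b, ∑ a, α a * G a b = 0 := by
    intro b
    have : ∑ a, α a * G a b = ∑ a, α a * (g a b - p a) - (∑ a, α a) * (q b - c) := by
      rw [sum_mul, ← sum_sub_distrib]
      exact sum_congr rfl fun a _ => by simp only [hG]; ring
    rw [this, hG1, hα]; ring
  have hGb : ∀ a, ∑ b, β b * G a b = 0 := by
    intro a
    have : ∑ b, β b * G a b = ∑ b, β b * g a b - ∑ b, β b * q b - (∑ b, β b) * (p a - c) := by
      rw [sum_mul, ← sum_sub_distrib, ← sum_sub_distrib]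
      exact sum_congr rfl fun a _ => by simp only [hG]; ring
    rw [this, hβqc, hβ]; simp only [hp]; ring
  have hvar : ∑ a, α a * ∑ b, β b * G a b ^ 2 ≤ t ^ 2 * (Fintype.card ι * Fintype.card κ) := by
    refine le_trans ?_ hMt
    calc ∑ a, α a * ∑ b, β b * G a b ^ 2 = ∑ b, β b * ∑ a, α a * G a b ^ 2 := by
          simp_rw [mul_sum]
          rw [sum_comm]
          exact sum_congr rfl fun b _ => sum_congr rfl fun a _ => by ring
      _ ≤ ∑ b, β b * ∑ a, α a * (g a b - p a) ^ 2 := by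
          refine sum_le_sum fun b _ => mul_le_mul_of_nonneg_left ?_ (hβ0 b)
          exact sum_sq_sub_mean_le α (fun a => g a b - p a) hα _ (hG1 b)
      _ = ∑ a, α a * ∑ b, β b * (g a b - p a) ^ 2 := by
          simp_rw [mul_sum]
          rw [sum_comm]
          exact sum_congr rfl fun b _ => sum_congr rfl fun a _ => by ring
      _ ≤ ∑ a, α a * ∑ b, β b * g a b ^ 2 := by
          refine sum_le_sum fun a _ => mul_le_mul_of_nonneg_left ?_ (hα0 a)
          exact sum_sq_sub_mean_le β (g a) hβ _ rfl
      _ ≤ ∑ a, ∑ b, M * J' a b := by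
          refine sum_le_sum fun a _ => ?_
          rw [mul_sum]
          refine sum_le_sum fun b _ => ?_
          have : α a * (β b * g a b ^ 2) = g a b * J' a b := by rw [← hgJ]; ring
          rw [this]
          exact mul_le_mul_of_nonneg_right (hgM a b) (hJ'0 a b)
      _ = M * c := by simp_rw [← mul_sum]; rfl
      _ ≤ M := mul_le_of_le_one_right hM0 hc1
  have harr := sum_abs_array_le (ι := ι) (κ := κ) α β hα0 hβ0 hα hβ G hGa hGb t ht hvar
  -- `D` collects all errors except the centred one; its total mass is `4 (1 - c)`.
  set D : A → B → ℝ := fun a b => (J a b - J' a b)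
    + α a * β b * ((1 - p a) + (1 - q b) + (1 - c)) with hD
  have hDsum : ∑ a, ∑ b, D a b = 4 * (1 - c) := by
    have e : ∀ a, ∑ b, D a b = α a - ∑ b, J' a b
        + (α a * (1 - p a) * ∑ b, β b + α a * (∑ b, β b - ∑ b, β b * q b)
          + α a * (1 - c) * ∑ b, β b) := by
      intro a
      nth_rewrite 1 [← hJ1]
      simp only [hD, mul_sum, ← sum_sub_distrib, ← sum_add_distrib]
      exact sum_congr rfl fun b _ => by ring
    have e2 : ∀ a, ∑ b, D a b = 4 * α a - ∑ b, J' a b - α a * p a - α a * (2 * c) := by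
      intro a; rw [e, hβqc, hβ]; ring
    simp_rw [e2]
    rw [sum_sub_distrib, sum_sub_distrib, sum_sub_distrib, ← mul_sum, ← sum_mul, hα, hαpc, ← hc]
    ring
  have hpt : ∀ (v : ι → A) (w : κ → B),
      |(∑ i, ∑ k, J (v i) (w k) * (∏ j ∈ univ.erase i, α (v j)) * ∏ j ∈ univ.erase k, β (w j))
        - (Fintype.card ι * Fintype.card κ : ℝ) * ((∏ j, α (v j)) * ∏ j, β (w j))|
      ≤ (∏ j, α (v j)) * (∏ j, β (w j)) * |∑ i, ∑ k, G (v i) (w k)|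
        + ∑ i, ∑ k, D (v i) (w k) * (∏ j ∈ univ.erase i, α (v j)) *
            ∏ j ∈ univ.erase k, β (w j) := by
    intro v w
    have hw : 0 ≤ (∏ j, α (v j)) * (∏ j, β (w j)) :=
      mul_nonneg (prod_nonneg fun _ _ => hα0 _) (prod_nonneg fun _ _ => hβ0 _)
    have e : (∑ i, ∑ k, J (v i) (w k) * (∏ j ∈ univ.erase i, α (v j)) *
          ∏ j ∈ univ.erase k, β (w j))
        - (Fintype.card ι * Fintype.card κ : ℝ) * ((∏ j, α (v j)) * ∏ j, β (w j))
        = (∏ j, α (v j)) * (∏ j, β (w j)) * (∑ i, ∑ k, G (v i) (w k))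
        + ∑ i, ∑ k, ((J (v i) (w k) - J' (v i) (w k))
            + α (v i) * β (w k) * ((p (v i) - 1) + (q (w k) - 1) + (1 - c))) *
            (∏ j ∈ univ.erase i, α (v j)) * ∏ j ∈ univ.erase k, β (w j) := by
      have e0 : (Fintype.card ι * Fintype.card κ : ℝ) * ((∏ j, α (v j)) * ∏ j, β (w j))
          = ∑ i : ι, ∑ k : κ, ((∏ j, α (v j)) * ∏ j, β (w j)) := by
        simp; ring
      rw [e0, mul_sum, ← sum_sub_distrib, ← sum_add_distrib]
      refine sum_congr rfl fun i _ => ?_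
      rw [mul_sum, ← sum_sub_distrib, ← sum_add_distrib]
      refine sum_congr rfl fun k _ => ?_
      rw [← mul_prod_erase univ (fun j => α (v j)) (mem_univ i),
        ← mul_prod_erase univ (fun j => β (w j)) (mem_univ k), ← hgJ (v i) (w k)]
      simp only [hG]
      ring
    rw [e]
    refine (abs_add_le _ _).trans (add_le_add ?_ ?_)
    · rw [abs_mul, abs_of_nonneg hw]
    · refine (abs_sum_le_sum_abs _ _).trans (sum_le_sum fun i _ => ?_)
      refine (abs_sum_le_sum_abs _ _).trans (sum_le_sum fun k _ => ?_)
      have hA : 0 ≤ ∏ j ∈ univ.erase i, α (v j) := prod_nonneg fun _ _ => hα0 _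
      have hB : 0 ≤ ∏ j ∈ univ.erase k, β (w j) := prod_nonneg fun _ _ => hβ0 _
      rw [abs_mul, abs_mul, abs_of_nonneg hA, abs_of_nonneg hB]
      refine mul_le_mul_of_nonneg_right (mul_le_mul_of_nonneg_right ?_ hA) hB
      have n1 := hJJ (v i) (w k)
      have n2 := mul_nonneg (hαp1 (v i)) (hβ0 (w k))
      have n3 := mul_nonneg (hβq1 (w k)) (hα0 (v i))
      have n4 := mul_nonneg (mul_nonneg (hα0 (v i)) (hβ0 (w k))) (sub_nonneg.2 hc1)
      simp only [hD]
      rw [abs_le]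
      constructor <;> nlinarith
  refine (sum_le_sum fun v _ => sum_le_sum fun w _ => hpt v w).trans ?_
  simp_rw [sum_add_distrib]
  have hDpin : ∑ v : ι → A, ∑ w : κ → B, ∑ i, ∑ k, D (v i) (w k) *
      (∏ j ∈ univ.erase i, α (v j)) * ∏ j ∈ univ.erase k, β (w j)
      = (Fintype.card ι * Fintype.card κ : ℝ) * (4 * (1 - c)) := by
    have e1 : ∀ (i : ι) (k : κ), ∑ v : ι → A, ∑ w : κ → B, D (v i) (w k) *
        (∏ j ∈ univ.erase i, α (v j)) * ∏ j ∈ univ.erase k, β (w j) = 4 * (1 - c) := by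
      intro i k
      rw [← hDsum, ← sum_pin α hα i (fun a => ∑ b, D a b)]
      refine sum_congr rfl fun v _ => ?_
      rw [← sum_pin β hβ k (fun b => D (v i) b), sum_mul]
      exact sum_congr rfl fun w _ => by ring
    have e2 : ∀ v : ι → A, ∑ w : κ → B, ∑ i, ∑ k, D (v i) (w k) *
        (∏ j ∈ univ.erase i, α (v j)) * ∏ j ∈ univ.erase k, β (w j)
        = ∑ i, ∑ k, ∑ w : κ → B, D (v i) (w k) *
        (∏ j ∈ univ.erase i, α (v j)) * ∏ j ∈ univ.erase k, β (w j) := by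
      intro v
      rw [sum_comm]
      exact sum_congr rfl fun i _ => sum_comm
    simp_rw [e2]
    rw [sum_comm]
    have e3 : ∀ i : ι, ∑ v : ι → A, ∑ k, ∑ w : κ → B, D (v i) (w k) *
        (∏ j ∈ univ.erase i, α (v j)) * ∏ j ∈ univ.erase k, β (w j)
        = Fintype.card κ * (4 * (1 - c)) := by
      intro i
      rw [sum_comm]
      simp_rw [e1]
      simp
    simp_rw [e3]
    simp; ring
  rw [hDpin]
  linarith

/-! ### Smoothing -/

/-- The rate condition, read as an admissible exponent for each `t > ε`. The infimum defining
`smoothImaxCond` need not be known to be attained, hence the slack between `ε` and `t`. -/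
lemma exists_smoothing {X : Type*} [Fintype X] (P Q : X → ℝ) (ε : ℝ) (hε0 : 0 < ε) (r1 r2 : ℕ)
    (hrate : Dmax ε P Q + ((2 * Real.logb 2 (1 / ε) : ℝ) : EReal) ≤
      (((r1 : ℝ) + (r2 : ℝ) : ℝ) : EReal)) (t : ℝ) (ht : ε < t) :
    ∃ P' : X → ℝ, ∃ M : ℝ, 0 ≤ M ∧ M ≤ t ^ 2 * (2 ^ r1 * 2 ^ r2) ∧
      (∀ x, 0 ≤ P' x ∧ P' x ≤ P x) ∧ l1dist P P' ≤ ε ∧ ∀ x, P' x ≤ M * Q x := by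
  have ht0 : 0 < t := hε0.trans ht
  have h1 : Dmax ε P Q ≤ (((r1 : ℝ) + r2 - 2 * Real.logb 2 (1 / ε) : ℝ) : EReal) := by
    rw [EReal.coe_sub]
    exact EReal.le_sub_iff_add_le (Or.inl (EReal.coe_ne_bot _)) (Or.inl (EReal.coe_ne_top _))
      |>.2 hrate
  have hlog : Real.logb 2 ε < Real.logb 2 t := Real.logb_lt_logb (by norm_num) hε0 ht
  have h2 : Dmax ε P Q < (((r1 : ℝ) + r2 + 2 * Real.logb 2 t : ℝ) : EReal) := by
    refine h1.trans_lt (EReal.coe_lt_coe_iff.2 ?_)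
    rw [one_div, Real.logb_inv]; linarith
  obtain ⟨_, ⟨d, ⟨P', hP', hl, hd⟩, rfl⟩, hlt⟩ := sInf_lt_iff.1 h2
  refine ⟨P', 2 ^ d, by positivity, ?_, hP', hl, hd⟩
  have hdl : d ≤ (r1 : ℝ) + r2 + 2 * Real.logb 2 t := (EReal.coe_lt_coe_iff.1 hlt).le
  calc (2 : ℝ) ^ d ≤ (2 : ℝ) ^ ((r1 : ℝ) + r2 + 2 * Real.logb 2 t) :=
        Real.rpow_le_rpow_of_exponent_le (by norm_num) hdl
    _ = t ^ 2 * (2 ^ r1 * 2 ^ r2) := by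
        rw [Real.rpow_add (by norm_num), Real.rpow_add (by norm_num), Real.rpow_natCast,
          Real.rpow_natCast, mul_comm (2 : ℝ) (Real.logb 2 t), Real.rpow_mul (by norm_num),
          Real.rpow_logb (by norm_num) (by norm_num) ht0]
        norm_num; ring

/-! ### Averaging over the conditioning variable -/

/-- One-shot mutual covering lemma.  `P1` is the distribution in which a uniformly random
cell `(k₁,k₂)` carries a sample of the joint conditional distribution `P^{U₁U₂|u₀}` and all
other coordinates are conditionally independent; `P2` places conditionally independent
samples everywhere and then chooses `(k₁,k₂)` with the same conditional law `κ` as in `P1`.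
If `r₁ + r₂ ≥ I_∞^ε(U₁ : U₂ | U₀)_P + 2·log₂(1/ε)`, then `‖P1 − P2‖₁ ≤ 5ε`. -/
theorem one_shot_mutual_covering {U0 U1 U2 : Type*}
    [Fintype U0] [Fintype U1] [Fintype U2]
    [DecidableEq U0] [DecidableEq U1] [DecidableEq U2]
    (P : U0 × U1 × U2 → ℝ) (hP : IsProbDist P)
    (ε : ℝ) (hε0 : 0 < ε) (hε1 : ε < 1)
    (r1 r2 : ℕ) (hr1 : 0 < r1) (hr2 : 0 < r2)
    (hrate : smoothImaxCond ε P + ((2 * Real.logb 2 (1 / ε) : ℝ) : EReal) ≤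
      (((r1 : ℝ) + (r2 : ℝ) : ℝ) : EReal))
    (κ : U0 × (Fin (2 ^ r1) → U1) × (Fin (2 ^ r2) → U2) →
      Fin (2 ^ r1) × Fin (2 ^ r2) → ℝ)
    (hκ : ∀ x, IsProbDist (κ x))
    (P1 P2 : U0 × (Fin (2 ^ r1) → U1) × (Fin (2 ^ r2) → U2) ×
      (Fin (2 ^ r1) × Fin (2 ^ r2)) → ℝ)
    (hP1 : ∀ u0 v1 v2 k, P1 (u0, v1, v2, k) =
      ((∑ a, ∑ b, P (u0, a, b)) / ((2 ^ r1 : ℝ) * (2 ^ r2 : ℝ))) *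
        (P (u0, v1 k.1, v2 k.2) / (∑ a, ∑ b, P (u0, a, b))) *
        (∏ j ∈ Finset.univ.erase k.1,
          ((∑ b, P (u0, v1 j, b)) / (∑ a, ∑ b, P (u0, a, b)))) *
        (∏ j ∈ Finset.univ.erase k.2,
          ((∑ a, P (u0, a, v2 j)) / (∑ a, ∑ b, P (u0, a, b)))))
    (hκP1 : ∀ u0 v1 v2, 0 < (∑ k, P1 (u0, v1, v2, k)) →
      ∀ k, κ (u0, v1, v2) k = P1 (u0, v1, v2, k) / ∑ k', P1 (u0, v1, v2, k'))
    (hP2 : ∀ u0 v1 v2 k, P2 (u0, v1, v2, k) =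
      ((∑ a, ∑ b, P (u0, a, b)) *
        (∏ j, ((∑ b, P (u0, v1 j, b)) / (∑ a, ∑ b, P (u0, a, b)))) *
        (∏ j, ((∑ a, P (u0, a, v2 j)) / (∑ a, ∑ b, P (u0, a, b))))) *
        κ (u0, v1, v2) k) :
    l1dist P1 P2 ≤ 5 * ε := by
  refine le_of_forall_gt_imp_ge_of_dense fun s hs => ?_
  obtain ⟨t, rfl⟩ : ∃ t, s = 4 * ε + t := ⟨s - 4 * ε, by ring⟩
  have ht : ε < t := by linarith
  have ht0 : 0 < t := hε0.trans ht
  obtain ⟨P', M, hM0, hMt, hP', hl, hPM⟩ := exists_smoothing P _ ε hε0 r1 r2 hrate t ht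
  have hP0 := hP.1
  set p : U0 → ℝ := fun u0 => ∑ a, ∑ b, P (u0, a, b) with hp
  have hp0 : ∀ u0, 0 ≤ p u0 := fun u0 => sum_nonneg fun a _ => sum_nonneg fun b _ => hP0 _
  have hp1 : ∑ u0, p u0 = 1 := by
    rw [← hP.2, Fintype.sum_prod_type]
    exact sum_congr rfl fun u _ =>
      (Fintype.sum_prod_type (fun x : U1 × U2 => P (u, x))).symm
  have hl' : ∑ u0, (p u0 - ∑ a, ∑ b, P' (u0, a, b)) ≤ ε := by
    refine le_trans (le_of_eq ?_) hl
    unfold l1dist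
    rw [Fintype.sum_prod_type]
    refine sum_congr rfl fun u _ => ?_
    rw [Fintype.sum_prod_type, ← sum_sub_distrib]
    refine sum_congr rfl fun a _ => ?_
    rw [← sum_sub_distrib]
    exact sum_congr rfl fun b _ => (abs_of_nonneg (sub_nonneg.2 (hP' _).2)).symm
  have hslice : ∀ u0, ∑ v1, ∑ v2, ∑ k, |P1 (u0, v1, v2, k) - P2 (u0, v1, v2, k)|
      ≤ 4 * (p u0 - ∑ a, ∑ b, P' (u0, a, b)) + t * p u0 := by
    intro u0
    have hsub : ∑ a, ∑ b, P' (u0, a, b) ≤ p u0 :=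
      sum_le_sum fun a _ => sum_le_sum fun b _ => (hP' _).2
    rcases (hp0 u0).eq_or_lt with hz | hpos
    · -- Where `p u0 = 0`, both `P1` and `P2` vanish, whatever the quotients by `0` are.
      have : ∀ v1 v2 k, |P1 (u0, v1, v2, k) - P2 (u0, v1, v2, k)| = 0 := by
        intro v1 v2 k
        rw [hP1, hP2]
        change |p u0 / _ * (_ / p u0) * _ * _ - p u0 * _ * _ * _| = 0
        rw [← hz]; simp
      simp_rw [this]
      simp only [sum_const_zero]
      nlinarith
    · set α : U1 → ℝ := fun a => (∑ b, P (u0, a, b)) / p u0 with hα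
      set β : U2 → ℝ := fun b => (∑ a, P (u0, a, b)) / p u0 with hβ
      set J : U1 → U2 → ℝ := fun a b => P (u0, a, b) / p u0 with hJ
      set J' : U1 → U2 → ℝ := fun a b => P' (u0, a, b) / p u0 with hJ'
      have hα0 : ∀ a, 0 ≤ α a := fun a => div_nonneg (sum_nonneg fun b _ => hP0 _) hpos.le
      have hβ0 : ∀ b, 0 ≤ β b := fun b => div_nonneg (sum_nonneg fun a _ => hP0 _) hpos.le
      have hJ0 : ∀ a b, 0 ≤ J a b := fun a b => div_nonneg (hP0 _) hpos.le
      have hαs : ∑ a, α a = 1 := by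
        simp only [hα]; rw [← sum_div]; exact div_self hpos.ne'
      have hβs : ∑ b, β b = 1 := by
        simp only [hβ]; rw [← sum_div, sum_comm]; exact div_self hpos.ne'
      have hcore := core_bound (ι := Fin (2 ^ r1)) (κ := Fin (2 ^ r2)) α β hα0 hβ0 hαs hβs J J'
        (fun a => by simp only [hJ, hα]; rw [sum_div])
        (fun b => by simp only [hJ, hβ]; rw [sum_div])
        (fun a b => div_nonneg (hP' _).1 hpos.le)
        (fun a b => div_le_div_of_nonneg_right (hP' _).2 hpos.le)
        M t hM0 ht0
        (fun a b => by
          have h := hPM (u0, a, b)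
          change P' (u0, a, b) ≤ M * ((∑ b, P (u0, a, b)) * (∑ a, P (u0, a, b)) / p u0) at h
          simp only [hJ', hα, hβ]
          rw [div_le_iff₀ hpos]
          refine h.trans (le_of_eq ?_)
          field_simp)
        (by simpa using hMt)
      simp only [Fintype.card_fin, Nat.cast_pow, Nat.cast_ofNat] at hcore
      set N : ℝ := 2 ^ r1 * 2 ^ r2 with hN
      have hNpos : 0 < N := by positivity
      have hJ's : ∑ a, ∑ b, J' a b = (∑ a, ∑ b, P' (u0, a, b)) / p u0 := by
        simp only [hJ', sum_div]
      have hP1' : ∀ v1 v2 k, P1 (u0, v1, v2, k) = p u0 / N * (J (v1 k.1) (v2 k.2) *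
          (∏ j ∈ univ.erase k.1, α (v1 j)) * ∏ j ∈ univ.erase k.2, β (v2 j)) := by
        intro v1 v2 k; rw [hP1]; simp only [hJ, hα, hβ, hp, hN]; ring
      have hP10 : ∀ v1 v2 k, 0 ≤ P1 (u0, v1, v2, k) := by
        intro v1 v2 k
        rw [hP1']
        exact mul_nonneg (div_nonneg hpos.le hNpos.le) (mul_nonneg (mul_nonneg (hJ0 _ _)
          (prod_nonneg fun _ _ => hα0 _)) (prod_nonneg fun _ _ => hβ0 _))
      have hker : ∀ v1 v2, ∑ k, |P1 (u0, v1, v2, k) - P2 (u0, v1, v2, k)|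
          = p u0 / N * |(∑ i, ∑ k, J (v1 i) (v2 k) * (∏ j ∈ univ.erase i, α (v1 j)) *
              ∏ j ∈ univ.erase k, β (v2 j)) - N * ((∏ j, α (v1 j)) * ∏ j, β (v2 j))| := by
        intro v1 v2
        -- Both distributions use the same kernel, also where the marginal `m` of `P1` vanishes.
        set m := ∑ k, P1 (u0, v1, v2, k) with hm
        have hfac : ∀ k, P1 (u0, v1, v2, k) = m * κ (u0, v1, v2) k := by
          intro k
          have hm0 : 0 ≤ m := sum_nonneg fun k _ => hP10 v1 v2 k
          rcases hm0.eq_or_lt with h0 | h0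
          · rw [← h0, zero_mul]
            exact (sum_eq_zero_iff_of_nonneg fun k _ => hP10 v1 v2 k).1 h0.symm k (mem_univ k)
          · rw [hκP1 u0 v1 v2 h0 k, ← hm]; field_simp
        have hterm : ∀ k, |P1 (u0, v1, v2, k) - P2 (u0, v1, v2, k)|
            = |m - p u0 * ((∏ j, α (v1 j)) * ∏ j, β (v2 j))| * κ (u0, v1, v2) k := by
          intro k
          rw [hfac, hP2, ← sub_mul, abs_mul, abs_of_nonneg ((hκ _).1 k), mul_assoc]
        simp_rw [hterm]
        rw [← mul_sum, (hκ _).2, mul_one]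
        have hmval : m = p u0 / N * ∑ i, ∑ k, J (v1 i) (v2 k) *
            (∏ j ∈ univ.erase i, α (v1 j)) * ∏ j ∈ univ.erase k, β (v2 j) := by
          rw [hm]
          simp_rw [hP1']
          rw [← mul_sum, Fintype.sum_prod_type]
        have hcancel : p u0 / N * (N * ((∏ j, α (v1 j)) * ∏ j, β (v2 j)))
            = p u0 * ((∏ j, α (v1 j)) * ∏ j, β (v2 j)) := by field_simp
        rw [hmval, ← hcancel, ← mul_sub, abs_mul, abs_of_nonneg (div_nonneg hpos.le hNpos.le)]
      simp_rw [hker, ← mul_sum]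
      refine (mul_le_mul_of_nonneg_left hcore (div_nonneg hpos.le hNpos.le)).trans (le_of_eq ?_)
      rw [hJ's]
      field_simp
  have hsplit : l1dist P1 P2
      = ∑ u0, ∑ v1, ∑ v2, ∑ k, |P1 (u0, v1, v2, k) - P2 (u0, v1, v2, k)| := by
    unfold l1dist
    rw [Fintype.sum_prod_type]
    refine sum_congr rfl fun u _ => ?_
    rw [Fintype.sum_prod_type]
    exact sum_congr rfl fun v1 _ => Fintype.sum_prod_type _
  rw [hsplit]
  refine (sum_le_sum fun u0 _ => hslice u0).trans ?_
  rw [sum_add_distrib, ← mul_sum, ← mul_sum, hp1]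
  linarith
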